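/- Let f ∈ L_1(𝕋) have a lacunary Fourier series (f ∈ Λ) and let α > 0. Then for every n ∈ ℕ, ω_α(f, 2^{-n})_{L_1(𝕋)} ≍ (Σ_{k=n}^∞ 2^{-2αk}‖(η_{2^k}f)^{(α)}‖_{L_1(𝕋)}²)^{1/2}, with implicit constants independent of f and n. -/

import Mathlib

open scoped ENNReal
open MeasureTheory

/-- Lebesgue measure on the fundamental interval `[0,2π]` of the circle `𝕋`. -/
noncomputable def circleMeasure : Measure ℝ :=
  volume.restrict (Set.Icc 0 (2 * Real.pi))

/-- `f` is `2π`-periodic. -/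
def Periodic2PiOne (f : ℝ → ℂ) : Prop :=
  ∀ x : ℝ, f (x + 2 * Real.pi) = f x

/-- Forward difference `Δ_h f = f(·+h) − f(·)`. -/
def cDiffOne (h : ℝ) (f : ℝ → ℂ) : ℝ → ℂ :=
  fun x => f (x + h) - f x

/-- Modulus of smoothness `ω_r(f,δ)_p = sup_{|h|≤δ} ‖Δ_h^r f‖_{L_p(𝕋)}`. -/
noncomputable def modSmoothOne (r : ℕ) (p : ℝ≥0∞) (f : ℝ → ℂ) (δ : ℝ) : ℝ≥0∞ :=
  ⨆ h : {h : ℝ // |h| ≤ δ}, eLpNorm ((cDiffOne h.1)^[r] f) p circleMeasure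

/-- Trigonometric polynomials of degree at most `n` on `𝕋`. -/
def TrigPolyOne (n : ℝ) : Set (ℝ → ℂ) :=
  {T | ∃ (s : Finset ℤ) (c : ℤ → ℂ), (∀ k ∈ s, |(k : ℝ)| ≤ n) ∧
    ∀ x : ℝ, T x = ∑ k ∈ s, c k * Complex.exp (Complex.I * k * x)}

/-- Fourier coefficient `\hat f(m) = (2π)^{-1} ∫_𝕋 f(x) e^{-imx} dx`. -/
noncomputable def fourierCoeffOne (f : ℝ → ℂ) (m : ℤ) : ℂ :=
  (1 / (2 * Real.pi) : ℝ) •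
    ∫ x, f x * Complex.exp (-(Complex.I * m * x)) ∂circleMeasure

/-- `f` has lacunary Fourier series: `\hat f(m) = 0` unless `|m|` is a power of `2`. -/
def LacunaryFourier (f : ℝ → ℂ) : Prop :=
  ∀ m : ℤ, (∀ j : ℕ, m.natAbs ≠ 2 ^ j) → fourierCoeffOne f m = 0

/-- Generalized binomial coefficient `binom(α,ν) = α(α−1)⋯(α−ν+1)/ν!`. -/
noncomputable def gBinom (α : ℝ) : ℕ → ℝ
  | 0 => 1
  | n + 1 => gBinom α n * (α - n) / (n + 1)

/-- Fractional difference `Δ_h^α f(x) = ∑_{ν=0}^∞ (−1)^ν binom(α,ν) f(x + (α−ν)h)`. -/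
noncomputable def fracDiffOne (α : ℝ) (h : ℝ) (f : ℝ → ℂ) : ℝ → ℂ :=
  fun x => ∑' ν : ℕ, ((-1 : ℝ) ^ ν * gBinom α ν) • f (x + (α - ν) * h)

/-- Fractional modulus of smoothness `ω_α(f,δ)_p = sup_{|h|≤δ} ‖Δ_h^α f‖_{L_p(𝕋)}`. -/
noncomputable def fracModSmoothOne (α : ℝ) (p : ℝ≥0∞) (f : ℝ → ℂ) (δ : ℝ) : ℝ≥0∞ :=
  ⨆ h : {h : ℝ // |h| ≤ δ}, eLpNorm (fracDiffOne α h.1 f) p circleMeasure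

/-- The Weyl derivative of order `α` of the de la Vallée Poussin mean `η_N f`:
`(η_N f)^{(α)}(x) = ∑_{m≠0} (im)^α η(|m|/N) \hat f(m) e^{imx}`. -/
noncomputable def vdpWeylOne (η : ℝ → ℝ) (α : ℝ) (N : ℕ) (f : ℝ → ℂ) : ℝ → ℂ :=
  fun x => ∑' m : ℤ,
    (if m = 0 then 0 else (Complex.I * (m : ℂ)) ^ (α : ℂ)) *
      ((η (|(m : ℝ)| / N) : ℝ) : ℂ) * fourierCoeffOne f m * Complex.exp (Complex.I * m * x)

lemma integral_circleMeasure {E : Type*} [NormedAddCommGroup E] [NormedSpace ℝ E] (f : ℝ → E) :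
    ∫ x, f x ∂circleMeasure = ∫ x in (0 : ℝ)..(2 * Real.pi), f x := by
  rw [circleMeasure, integral_Icc_eq_integral_Ioc,
    intervalIntegral.integral_of_le Real.two_pi_pos.le]

lemma integrable_circleMeasure_iff {E : Type*} [NormedAddCommGroup E] {f : ℝ → E} :
    Integrable f circleMeasure ↔ IntervalIntegrable f volume 0 (2 * Real.pi) := by
  rw [intervalIntegrable_iff_integrableOn_Icc_of_le Real.two_pi_pos.le, circleMeasure,
    IntegrableOn]

instance : IsFiniteMeasure circleMeasure := by
  unfold circleMeasure
  infer_instance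

/-- The character `x ↦ e^{imx}`. -/
noncomputable def circleExp (m : ℤ) (x : ℝ) : ℂ := Complex.exp (Complex.I * m * x)

lemma circleExp_add (m k : ℤ) (x : ℝ) : circleExp (m + k) x = circleExp m x * circleExp k x := by
  simp only [circleExp, ← Complex.exp_add]
  push_cast
  ring_nf

lemma circleExp_zero (x : ℝ) : circleExp 0 x = 1 := by simp [circleExp]

lemma norm_circleExp (m : ℤ) (x : ℝ) : ‖circleExp m x‖ = 1 := by
  have : Complex.I * m * x = ((m * x : ℝ) : ℂ) * Complex.I := by push_cast; ring
  rw [circleExp, this, Complex.norm_exp_ofReal_mul_I]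

lemma conj_circleExp (m : ℤ) (x : ℝ) :
    (starRingEnd ℂ) (circleExp m x) = circleExp (-m) x := by
  rw [circleExp, circleExp, ← Complex.exp_conj]
  simp

lemma continuous_circleExp (m : ℤ) : Continuous (circleExp m) := by
  unfold circleExp
  fun_prop

lemma circleExp_add_right (m : ℤ) (x y : ℝ) :
    circleExp m (x + y) = circleExp m x * circleExp m y := by
  simp only [circleExp, ← Complex.exp_add]
  push_cast
  ring_nf

lemma circleExp_two_pi (m : ℤ) : circleExp m (2 * Real.pi) = 1 := by
  rw [circleExp, Complex.exp_eq_one_iff]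
  exact ⟨m, by push_cast; ring⟩

lemma fourierCoeffOne_eq (f : ℝ → ℂ) (m : ℤ) :
    fourierCoeffOne f m =
      (2 * Real.pi : ℂ)⁻¹ * ∫ x, f x * circleExp (-m) x ∂circleMeasure := by
  have : ∀ x : ℝ, Complex.exp (-(Complex.I * m * x)) = circleExp (-m) x := by
    intro x
    simp [circleExp]
  simp only [fourierCoeffOne, this, Complex.real_smul]
  push_cast
  rw [one_div]

lemma integral_mul_circleExp (f : ℝ → ℂ) (m : ℤ) :
    ∫ x, f x * circleExp m x ∂circleMeasure = 2 * Real.pi * fourierCoeffOne f (-m) := by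
  have h : (2 * Real.pi : ℂ) ≠ 0 := by exact_mod_cast Real.two_pi_pos.ne'
  rw [fourierCoeffOne_eq, neg_neg, mul_inv_cancel_left₀ h]

lemma MeasureTheory.Integrable.mul_circleExp {f : ℝ → ℂ} {μ : Measure ℝ} (hf : Integrable f μ)
    (m : ℤ) : Integrable (fun x => f x * circleExp m x) μ :=
  hf.mul_bdd (c := 1) (continuous_circleExp m).aestronglyMeasurable
    (Filter.Eventually.of_forall fun x => (norm_circleExp m x).le)

lemma integral_circleExp (m : ℤ) :
    ∫ x, circleExp m x ∂circleMeasure = if m = 0 then (2 * Real.pi : ℂ) else 0 := by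
  rw [integral_circleMeasure]
  split_ifs with h
  · subst h
    simp [circleExp_zero]
  · have hm : Complex.I * m ≠ 0 := mul_ne_zero Complex.I_ne_zero (by exact_mod_cast h)
    simp only [circleExp]
    rw [integral_exp_mul_complex hm]
    have := circleExp_two_pi m
    simp only [circleExp] at this
    push_cast at this
    simp [this]

/-! ### Riesz products -/

/-- Partial products of `∏ (1 + i Re (b_k e^{i 2^{2k+r} x}))`. -/
noncomputable def rieszProd (r : ℕ) (b : ℕ → ℂ) (K : ℕ) (x : ℝ) : ℂ :=
  ∏ k ∈ Finset.range K, (1 + Complex.I * ((b k * circleExp (2 ^ (2 * k + r)) x).re : ℂ))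

lemma norm_rieszProd_le (r : ℕ) (b : ℕ → ℂ) (K : ℕ) (x : ℝ) :
    ‖rieszProd r b K x‖ ≤ Real.exp (∑ k ∈ Finset.range K, ‖b k‖ ^ 2 / 2) := by
  rw [rieszProd, norm_prod, Real.exp_sum]
  refine Finset.prod_le_prod (fun _ _ => norm_nonneg _) fun k _ => ?_
  set t := (b k * circleExp (2 ^ (2 * k + r)) x).re
  have ht : t ^ 2 ≤ ‖b k‖ ^ 2 := by
    rw [sq_le_sq, abs_of_nonneg (norm_nonneg (b k))]
    refine (Complex.abs_re_le_norm _).trans ?_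
    rw [norm_mul, norm_circleExp, mul_one]
  refine le_of_sq_le_sq ?_ (Real.exp_pos _).le
  rw [Complex.sq_norm, Complex.normSq_apply, ← Real.exp_nat_mul]
  have := Real.add_one_le_exp (‖b k‖ ^ 2)
  push_cast
  rw [mul_div_cancel₀ _ two_ne_zero]
  simp
  nlinarith

lemma continuous_rieszProd (r : ℕ) (b : ℕ → ℂ) (K : ℕ) : Continuous (rieszProd r b K) := by
  unfold rieszProd
  refine continuous_finsetProd _ fun k _ => ?_
  have := continuous_circleExp (2 ^ (2 * k + r))
  fun_prop

/-- Trigonometric polynomials with frequencies `m ≠ 0`, `3|m| < N`. -/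
noncomputable def punctTrigSpan (N : ℤ) : Submodule ℂ (ℝ → ℂ) :=
  Submodule.span ℂ (circleExp '' {m | m ≠ 0 ∧ 3 * |m| < N})

lemma circleExp_mem_punctTrigSpan {N m : ℤ} (h0 : m ≠ 0) (h : 3 * |m| < N) :
    circleExp m ∈ punctTrigSpan N :=
  Submodule.subset_span ⟨m, ⟨h0, h⟩, rfl⟩

lemma punctTrigSpan_mono {N N' : ℤ} (h : N ≤ N') : punctTrigSpan N ≤ punctTrigSpan N' :=
  Submodule.span_mono (Set.image_mono fun _ hm => ⟨hm.1, hm.2.trans_le h⟩)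

lemma circleExp_mul_mem_punctTrigSpan {N j : ℤ} (hj : |j| = N) {p : ℝ → ℂ}
    (hp : p ∈ punctTrigSpan N) : circleExp j * p ∈ punctTrigSpan (4 * N) := by
  induction hp using Submodule.span_induction with
  | mem x hx =>
    obtain ⟨m, ⟨h0, hm⟩, rfl⟩ := hx
    have : circleExp j * circleExp m = circleExp (j + m) := by
      ext x
      rw [Pi.mul_apply, circleExp_add]
    rw [this]
    refine circleExp_mem_punctTrigSpan ?_ ?_ <;> grind
  | zero => simp
  | add x y _ _ hx hy =>
    rw [mul_add]
    exact add_mem hx hy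
  | smul a x _ hx =>
    rw [mul_smul_comm]
    exact Submodule.smul_mem _ _ hx

lemma rieszProd_succ (r : ℕ) (b : ℕ → ℂ) (K : ℕ) :
    rieszProd r b (K + 1) = rieszProd r b K +
      ((Complex.I / 2 * b K) • (circleExp (2 ^ (2 * K + r)) * rieszProd r b K) +
      (Complex.I / 2 * (starRingEnd ℂ) (b K)) •
        (circleExp (-2 ^ (2 * K + r)) * rieszProd r b K)) := by
  ext x
  simp only [Pi.add_apply, Pi.smul_apply, Pi.mul_apply, smul_eq_mul]
  rw [rieszProd, Finset.prod_range_succ, ← rieszProd, Complex.re_eq_add_conj, map_mul,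
    conj_circleExp]
  ring

lemma rieszProd_sub_one_mem (r : ℕ) (b : ℕ → ℂ) (K : ℕ) :
    rieszProd r b K - 1 ∈ punctTrigSpan (2 ^ (2 * K + r)) := by
  induction K with
  | zero =>
    have : rieszProd r b 0 - 1 = 0 := by
      ext x
      simp [rieszProd]
    rw [this]
    exact zero_mem _
  | succ K ih =>
    have h4 : (2 : ℤ) ^ (2 * (K + 1) + r) = 4 * 2 ^ (2 * K + r) := by ring
    have hpos : (0 : ℤ) < 2 ^ (2 * K + r) := by positivity
    have key : ∀ j : ℤ, |j| = 2 ^ (2 * K + r) →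
        circleExp j * rieszProd r b K ∈ punctTrigSpan (4 * 2 ^ (2 * K + r)) := by
      intro j hj
      have : circleExp j * rieszProd r b K =
          circleExp j * (rieszProd r b K - 1) + circleExp j := by ring
      rw [this]
      refine add_mem (circleExp_mul_mem_punctTrigSpan hj ih)
        (circleExp_mem_punctTrigSpan ?_ ?_)
      · rintro rfl
        simp at hj
        omega
      · omega
    rw [rieszProd_succ, add_sub_right_comm, h4]
    refine add_mem (punctTrigSpan_mono (by omega) ih) (add_mem
      (Submodule.smul_mem _ _ (key _ ?_)) (Submodule.smul_mem _ _ (key _ ?_)))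
    · exact abs_of_pos hpos
    · rw [abs_neg, abs_of_pos hpos]

lemma natAbs_ne_two_pow {s : ℕ} {j m : ℤ} (hj : |j| = 2 ^ s) (h0 : m ≠ 0)
    (hm : 3 * |m| < 2 ^ s) (i : ℕ) : (j + m).natAbs ≠ 2 ^ i := by
  intro h
  have h' : |j + m| = 2 ^ i := by
    rw [Int.abs_eq_natAbs, h]
    push_cast
    rfl
  rcases lt_trichotomy i s with hi | rfl | hi
  · have : (2 : ℤ) ^ (i + 1) ≤ 2 ^ s := pow_le_pow_right₀ (by norm_num) hi
    rw [pow_succ] at this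
    grind
  · grind
  · have : (2 : ℤ) ^ (s + 1) ≤ 2 ^ i := pow_le_pow_right₀ (by norm_num) hi
    rw [pow_succ] at this
    grind

lemma continuous_of_mem_punctTrigSpan {N : ℤ} {p : ℝ → ℂ} (hp : p ∈ punctTrigSpan N) :
    Continuous p := by
  induction hp using Submodule.span_induction with
  | mem x hx =>
    obtain ⟨m, -, rfl⟩ := hx
    exact continuous_circleExp m
  | zero => exact continuous_zero
  | add x y _ _ hx hy => exact hx.add hy
  | smul a x _ hx => exact hx.const_smul a

lemma MeasureTheory.Integrable.mul_continuous_circle {f p : ℝ → ℂ}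
    (hf : Integrable f circleMeasure) (hp : Continuous p) :
    Integrable (fun x => f x * p x) circleMeasure := by
  rw [integrable_circleMeasure_iff] at hf ⊢
  exact hf.mul_continuousOn hp.continuousOn

lemma integral_mul_punctTrigSpan_eq_zero {g : ℝ → ℂ} (hg : Integrable g circleMeasure)
    (hl : LacunaryFourier g) {s : ℕ} {j : ℤ} (hj : |j| = 2 ^ s) {p : ℝ → ℂ}
    (hp : p ∈ punctTrigSpan (2 ^ s)) : ∫ x, g x * circleExp j x * p x ∂circleMeasure = 0 := by
  have hg' := hg.mul_circleExp j
  induction hp using Submodule.span_induction with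
  | mem x hx =>
    obtain ⟨m, ⟨h0, hm⟩, rfl⟩ := hx
    simp only [mul_assoc, ← circleExp_add]
    rw [integral_mul_circleExp, hl, mul_zero]
    intro i
    rw [Int.natAbs_neg]
    exact natAbs_ne_two_pow hj h0 hm i
  | zero => simp
  | add x y hx' hy' hx hy =>
    simp only [Pi.add_apply, mul_add]
    rw [integral_add (hg'.mul_continuous_circle (continuous_of_mem_punctTrigSpan hx'))
      (hg'.mul_continuous_circle (continuous_of_mem_punctTrigSpan hy')), hx, hy, add_zero]
  | smul a x _ hx =>
    simp only [Pi.smul_apply, smul_eq_mul, mul_left_comm _ a]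
    rw [integral_const_mul, hx, mul_zero]

lemma integral_mul_rieszProd {g : ℝ → ℂ} (hg : Integrable g circleMeasure)
    (hl : LacunaryFourier g) (r : ℕ) (b : ℕ → ℂ) (K : ℕ) :
    ∫ x, g x * rieszProd r b K x ∂circleMeasure =
      Real.pi * Complex.I * ∑ k ∈ Finset.range K,
        (b k * fourierCoeffOne g (-2 ^ (2 * k + r)) +
          (starRingEnd ℂ) (b k) * fourierCoeffOne g (2 ^ (2 * k + r))) := by
  induction K with
  | zero =>
    have h := integral_mul_circleExp g 0
    have h0 : fourierCoeffOne g 0 = 0 := hl 0 fun j => by simpa using (pow_pos two_pos j).ne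
    simp only [circleExp_zero, neg_zero, h0, mul_zero] at h
    simpa [rieszProd] using h
  | succ K ih =>
    have key : ∀ j : ℤ, |j| = 2 ^ (2 * K + r) →
        ∫ x, g x * (circleExp j x * rieszProd r b K x) ∂circleMeasure =
          2 * Real.pi * fourierCoeffOne g (-j) := by
      intro j hj
      have h0 := integral_mul_punctTrigSpan_eq_zero hg hl hj (rieszProd_sub_one_mem r b K)
      have h1 : ∀ x, g x * (circleExp j x * rieszProd r b K x) =
          g x * circleExp j x * (rieszProd r b K - 1) x + g x * circleExp j x := by
        intro x
        simp
        ring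
      simp only [h1]
      rw [integral_add ((hg.mul_circleExp j).mul_continuous_circle
        (continuous_of_mem_punctTrigSpan (rieszProd_sub_one_mem r b K))) (hg.mul_circleExp j),
        h0, zero_add, integral_mul_circleExp]
    have hc := continuous_rieszProd r b K
    have hpos : (0 : ℤ) < 2 ^ (2 * K + r) := by positivity
    have i1 : ∀ (c : ℂ) (j : ℤ), Integrable
        (fun x => c * (g x * (circleExp j x * rieszProd r b K x))) circleMeasure := fun c j =>
      (hg.mul_continuous_circle ((continuous_circleExp j).mul hc)).const_mul c
    rw [rieszProd_succ, Finset.sum_range_succ, mul_add (Real.pi * Complex.I : ℂ), ← ih]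
    simp only [Pi.add_apply, Pi.smul_apply, Pi.mul_apply, smul_eq_mul, mul_add,
      mul_left_comm (g _) (_ / 2 * _)]
    rw [integral_add (hg.mul_continuous_circle hc) ((i1 _ _).fun_add (i1 _ _)),
      integral_add (i1 _ _) (i1 _ _), integral_const_mul,
      integral_const_mul, key _ (abs_of_pos hpos), key _ (by rw [abs_neg, abs_of_pos hpos]),
      neg_neg]
    ring

lemma norm_sum_mul_fourierCoeffOne_le {g : ℝ → ℂ} (hg : Integrable g circleMeasure)
    (hl : LacunaryFourier g) (r K : ℕ) (b : ℕ → ℂ)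
    (hb : ∑ k ∈ Finset.range K, ‖b k‖ ^ 2 ≤ 1) :
    ‖∑ k ∈ Finset.range K, (b k * fourierCoeffOne g (-2 ^ (2 * k + r)) +
      (starRingEnd ℂ) (b k) * fourierCoeffOne g (2 ^ (2 * k + r)))‖ ≤
      ∫ x, ‖g x‖ ∂circleMeasure := by
  have h1 : ‖∫ x, g x * rieszProd r b K x ∂circleMeasure‖ ≤
      (∫ x, ‖g x‖ ∂circleMeasure) * Real.pi := by
    rw [← integral_mul_const]
    refine norm_integral_le_of_norm_le (hg.norm.mul_const _)
      (Filter.Eventually.of_forall fun x => ?_)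
    rw [norm_mul]
    gcongr
    refine (norm_rieszProd_le r b K x).trans ?_
    calc Real.exp (∑ k ∈ Finset.range K, ‖b k‖ ^ 2 / 2) ≤ Real.exp 1 := by
          rw [← Finset.sum_div]
          gcongr
          linarith
      _ ≤ Real.pi := by linarith [Real.exp_one_lt_d9, Real.pi_gt_three]
  rw [integral_mul_rieszProd hg hl, norm_mul, norm_mul, Complex.norm_I, mul_one,
    Complex.norm_real, Real.norm_of_nonneg Real.pi_pos.le, mul_comm] at h1
  exact le_of_mul_le_mul_right h1 Real.pi_pos

lemma sum_sq_norm_le_of_dual {K : ℕ} {u : ℕ → ℂ} {A : ℝ}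
    (h : ∀ b : ℕ → ℂ, ∑ k ∈ Finset.range K, ‖b k‖ ^ 2 ≤ 1 →
      ‖∑ k ∈ Finset.range K, b k * u k‖ ≤ A) :
    ∑ k ∈ Finset.range K, ‖u k‖ ^ 2 ≤ A ^ 2 := by
  set S := ∑ k ∈ Finset.range K, ‖u k‖ ^ 2 with hS
  have hS0 : 0 ≤ S := Finset.sum_nonneg fun _ _ => sq_nonneg _
  rcases hS0.eq_or_lt with h0 | hpos
  · rw [← h0]
    positivity
  have hsq : √S ^ 2 = S := Real.sq_sqrt hS0
  have hs : 0 < √S := Real.sqrt_pos.mpr hpos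
  have := h (fun k => (starRingEnd ℂ) (u k) / (√S : ℝ)) (by
    simp only [norm_div, RCLike.norm_conj, Complex.norm_real, Real.norm_of_nonneg hs.le, div_pow]
    rw [← Finset.sum_div, hsq, ← hS, div_self hpos.ne'])
  have h2 : ∑ k ∈ Finset.range K, (starRingEnd ℂ) (u k) / (√S : ℝ) * u k = (√S : ℝ) := by
    have : ∀ k, (starRingEnd ℂ) (u k) / (√S : ℝ) * u k = ((‖u k‖ ^ 2 / √S : ℝ) : ℂ) := by
      intro k
      rw [div_mul_eq_mul_div, Complex.conj_mul']
      push_cast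
      rfl
    simp only [this]
    rw [← Complex.ofReal_sum, ← Finset.sum_div, ← hS]
    congr 1
    rw [div_eq_iff hs.ne', ← sq, hsq]
  rw [h2, Complex.norm_real, Real.norm_of_nonneg hs.le] at this
  calc S = √S ^ 2 := hsq.symm
    _ ≤ A ^ 2 := by gcongr

lemma sum_sq_fourierCoeffOne_le {g : ℝ → ℂ} (hg : Integrable g circleMeasure)
    (hl : LacunaryFourier g) (r K : ℕ) :
    ∑ k ∈ Finset.range K, (‖fourierCoeffOne g (2 ^ (2 * k + r))‖ ^ 2 +
      ‖fourierCoeffOne g (-2 ^ (2 * k + r))‖ ^ 2) ≤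
      2 * (∫ x, ‖g x‖ ∂circleMeasure) ^ 2 := by
  set A := ∫ x, ‖g x‖ ∂circleMeasure
  have key : ∀ b : ℕ → ℂ, ∑ k ∈ Finset.range K, ‖b k‖ ^ 2 ≤ 1 →
      ‖∑ k ∈ Finset.range K, b k * fourierCoeffOne g (-2 ^ (2 * k + r))‖ ≤ A ∧
      ‖∑ k ∈ Finset.range K,
        (starRingEnd ℂ) (b k) * fourierCoeffOne g (2 ^ (2 * k + r))‖ ≤ A := by
    intro b hb
    have h1 := norm_sum_mul_fourierCoeffOne_le hg hl r K b hb
    have h2 := norm_sum_mul_fourierCoeffOne_le hg hl r K (fun k => Complex.I * b k)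
      (by simpa using hb)
    have e2 : ∀ k, Complex.I * b k * fourierCoeffOne g (-2 ^ (2 * k + r)) +
        (starRingEnd ℂ) (Complex.I * b k) * fourierCoeffOne g (2 ^ (2 * k + r)) =
        Complex.I * (b k * fourierCoeffOne g (-2 ^ (2 * k + r)) -
          (starRingEnd ℂ) (b k) * fourierCoeffOne g (2 ^ (2 * k + r))) := by
      intro k
      rw [map_mul, Complex.conj_I]
      ring
    simp only [e2] at h2
    rw [← Finset.mul_sum, norm_mul, Complex.norm_I, one_mul, Finset.sum_sub_distrib] at h2
    rw [Finset.sum_add_distrib] at h1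
    set P := ∑ k ∈ Finset.range K, b k * fourierCoeffOne g (-2 ^ (2 * k + r))
    set Q := ∑ k ∈ Finset.range K,
      (starRingEnd ℂ) (b k) * fourierCoeffOne g (2 ^ (2 * k + r))
    have hP := norm_add_le (P + Q) (P - Q)
    have hQ := norm_sub_le (P + Q) (P - Q)
    have eP : P + Q + (P - Q) = (2 : ℂ) * P := by ring
    have eQ : P + Q - (P - Q) = (2 : ℂ) * Q := by ring
    rw [eP, norm_mul, Complex.norm_ofNat] at hP
    rw [eQ, norm_mul, Complex.norm_ofNat] at hQ
    exact ⟨by linarith, by linarith⟩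
  rw [Finset.sum_add_distrib]
  have h1 := sum_sq_norm_le_of_dual fun b hb => (key b hb).1
  have h2 := sum_sq_norm_le_of_dual (K := K)
    (u := fun k => fourierCoeffOne g (2 ^ (2 * k + r))) (A := A) fun b hb => by
      simpa using (key (fun k => (starRingEnd ℂ) (b k)) (by simpa using hb)).2
  linarith

/-- The sum of squares of the Fourier coefficients of `g` of orders `±2^j`. -/
noncomputable def lacEnergy (g : ℝ → ℂ) : ℝ≥0∞ :=
  ∑' j : ℕ, (‖fourierCoeffOne g (2 ^ j)‖ₑ ^ 2 + ‖fourierCoeffOne g (-2 ^ j)‖ₑ ^ 2)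

lemma lacEnergy_le {g : ℝ → ℂ} (hg : Integrable g circleMeasure) (hl : LacunaryFourier g) :
    lacEnergy g ≤ 4 * eLpNorm g 1 circleMeasure ^ 2 := by
  set F : ℕ → ℝ≥0∞ := fun j =>
    ‖fourierCoeffOne g (2 ^ j)‖ₑ ^ 2 + ‖fourierCoeffOne g (-2 ^ j)‖ₑ ^ 2 with hF
  have key : ∀ r, ∑' k, F (2 * k + r) ≤ 2 * eLpNorm g 1 circleMeasure ^ 2 := by
    intro r
    refine ENNReal.tsum_le_of_sum_range_le fun K => ?_
    have h := ENNReal.ofReal_le_ofReal (sum_sq_fourierCoeffOne_le hg hl r K)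
    rw [ENNReal.ofReal_sum_of_nonneg (fun _ _ => by positivity), ENNReal.ofReal_mul zero_le_two,
      ENNReal.ofReal_pow (integral_nonneg fun _ => norm_nonneg _),
      ofReal_integral_norm_eq_lintegral_enorm hg, ← eLpNorm_one_eq_lintegral_enorm] at h
    simp only [ENNReal.ofReal_add (sq_nonneg _) (sq_nonneg _),
      ENNReal.ofReal_pow (norm_nonneg _), ofReal_norm, ENNReal.ofReal_ofNat] at h
    exact h
  have : lacEnergy g = ∑' k, F (2 * k) + ∑' k, F (2 * k + 1) :=
    (tsum_even_add_odd ENNReal.summable ENNReal.summable).symm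
  rw [this]
  calc _ ≤ 2 * eLpNorm g 1 circleMeasure ^ 2 + 2 * eLpNorm g 1 circleMeasure ^ 2 :=
        add_le_add (key 0) (key 1)
    _ = _ := by ring

/-! ### Uniqueness and Parseval -/

local instance : Fact (0 < 2 * Real.pi) := ⟨Real.two_pi_pos⟩

lemma fourier_two_pi_coe (m : ℤ) (x : ℝ) :
    fourier m (x : AddCircle (2 * Real.pi)) = circleExp m x := by
  rw [fourier_coe_apply, circleExp]
  congr 1
  have : (Real.pi : ℂ) ≠ 0 := by exact_mod_cast Real.pi_ne_zero
  push_cast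
  field_simp

lemma integral_mul_continuousMap_eq_zero {d : ℝ → ℂ} (hd : Integrable d circleMeasure)
    (h0 : ∀ m, fourierCoeffOne d m = 0) (ψ : C(AddCircle (2 * Real.pi), ℂ)) :
    ∫ x, d x * ψ x ∂circleMeasure = 0 := by
  have h_integral : ∀ ψ : C(AddCircle (2 * Real.pi), ℂ),
      Integrable (fun x : ℝ => d x * ψ x) circleMeasure := fun ψ =>
    hd.mul_continuous_circle (ψ.continuous.comp (AddCircle.continuous_mk' _))
  let L : C(AddCircle (2 * Real.pi), ℂ) →L[ℂ] ℂ := LinearMap.mkContinuous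
    { toFun := fun ψ => ∫ x, d x * ψ x ∂circleMeasure
      map_add' := fun ψ φ => by
        simp only [ContinuousMap.add_apply, mul_add]
        exact integral_add (h_integral ψ) (h_integral φ)
      map_smul' := fun c ψ => by
        simp only [ContinuousMap.smul_apply, smul_eq_mul, mul_left_comm _ c, RingHom.id_apply]
        exact integral_const_mul _ _ } (∫ x, ‖d x‖ ∂circleMeasure) fun ψ => by
      simp only [LinearMap.coe_mk, AddHom.coe_mk]
      rw [← integral_mul_const]
      refine norm_integral_le_of_norm_le (hd.norm.mul_const _)
        (Filter.Eventually.of_forall fun x => ?_)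
      rw [norm_mul]
      gcongr
      exact ψ.norm_coe_le_norm _
  have hker : (Submodule.span ℂ (Set.range <| @fourier (2 * Real.pi))).topologicalClosure ≤
      L.ker := by
    refine Submodule.topologicalClosure_minimal _ (Submodule.span_le.mpr ?_) L.isClosed_ker
    rintro _ ⟨m, rfl⟩
    change ∫ x : ℝ, d x * fourier m (x : AddCircle (2 * Real.pi)) ∂circleMeasure = 0
    simp only [fourier_two_pi_coe]
    rw [integral_mul_circleExp, h0, mul_zero]
  rw [span_fourier_closure_eq_top] at hker
  exact hker (Submodule.mem_top (x := ψ))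

lemma ae_eq_zero_of_fourierCoeffOne_eq_zero {d : ℝ → ℂ} (hd : Integrable d circleMeasure)
    (h0 : ∀ m, fourierCoeffOne d m = 0) : d =ᵐ[circleMeasure] 0 := by
  have hd' : IntegrableOn d (Set.Ioo 0 (2 * Real.pi)) volume :=
    IntegrableOn.mono_set hd Set.Ioo_subset_Icc_self
  have h := isOpen_Ioo.ae_eq_zero_of_integral_contDiff_smul_eq_zero
    (μ := volume) hd'.locallyIntegrableOn fun g hg _ hs => by
      have hz : ∀ x ∉ Set.Ioo 0 (2 * Real.pi), g x = 0 := fun x hx =>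
        image_eq_zero_of_notMem_tsupport fun h => hx (hs h)
      have hc : Continuous (AddCircle.liftIco (2 * Real.pi) 0 fun x => (g x : ℂ)) :=
        AddCircle.liftIco_zero_continuous (by rw [hz 0 (by simp), hz (2 * Real.pi) (by simp)])
          (Complex.continuous_ofReal.comp hg.continuous).continuousOn
      have h1 := integral_mul_continuousMap_eq_zero hd h0 ⟨_, hc⟩
      rw [← setIntegral_eq_integral_of_forall_compl_eq_zero (s := Set.Ico 0 (2 * Real.pi))
        (fun x hx => by rw [hz x fun h => hx (Set.Ioo_subset_Ico_self h), zero_smul])]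
      rw [circleMeasure, integral_Icc_eq_integral_Ico] at h1
      rw [← h1]
      refine setIntegral_congr_fun measurableSet_Ico fun x hx => ?_
      simp only [ContinuousMap.coe_mk]
      rw [AddCircle.liftIco_coe_apply (by simpa using hx), Complex.real_smul, mul_comm]
  rw [circleMeasure, Filter.EventuallyEq, restrict_Ioo_eq_restrict_Icc.symm,
    ae_restrict_iff' measurableSet_Ioo]
  exact h

lemma tsum_sq_fourierCoeffOne_le {g : ℝ → ℂ} (hl : LacunaryFourier g) :
    ∑' m : ℤ, ‖fourierCoeffOne g m‖ₑ ^ 2 ≤ lacEnergy g := by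
  set e : ℕ × Bool → ℤ := fun p => if p.2 then 2 ^ p.1 else -2 ^ p.1 with he
  have hpos : ∀ j : ℕ, (0 : ℤ) < 2 ^ j := fun j => by positivity
  have hinj : Function.Injective e := by
    rintro ⟨i, a⟩ ⟨j, b⟩ h
    have := hpos i
    have := hpos j
    cases a <;> cases b <;> simp [he] at h <;> first | omega | rw [h]
  have hsupp : Function.support (fun m => ‖fourierCoeffOne g m‖ₑ ^ 2) ⊆ Set.range e := by
    intro m hm
    by_contra hr
    refine hm ?_
    change ‖fourierCoeffOne g m‖ₑ ^ 2 = 0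
    rw [hl m, enorm_zero, zero_pow two_ne_zero]
    intro j hj
    rcases Int.natAbs_eq m with h | h
    · exact hr ⟨(j, true), by rw [h, hj]; simp [he]⟩
    · exact hr ⟨(j, false), by rw [h, hj]; simp [he]⟩
  rw [← hinj.tsum_eq hsupp, ENNReal.tsum_prod', lacEnergy]
  refine ENNReal.tsum_le_tsum fun j => ?_
  rw [tsum_bool]
  simp [he, add_comm]

lemma eLpNorm_one_comp_coe (G : AddCircle (2 * Real.pi) → ℂ)
    (hG : AEStronglyMeasurable G volume) :
    eLpNorm (fun x : ℝ => G x) 1 circleMeasure =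
      ENNReal.ofReal (2 * Real.pi) * eLpNorm G 1 AddCircle.haarAddCircle := by
  have hmp := AddCircle.measurePreserving_mk (2 * Real.pi) 0
  rw [zero_add] at hmp
  have hm : volume.restrict (Set.Ioc 0 (2 * Real.pi)) = circleMeasure := by
    rw [circleMeasure, restrict_Ioc_eq_restrict_Icc]
  rw [hm] at hmp
  have := eLpNorm_comp_measurePreserving (p := 1) hG hmp
  rw [Function.comp_def] at this
  rw [this, AddCircle.volume_eq_smul_haarAddCircle, eLpNorm_one_smul_measure]

lemma fourierCoeffOne_comp_coe (G : AddCircle (2 * Real.pi) → ℂ) (m : ℤ) :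
    fourierCoeffOne (fun x : ℝ => G x) m = fourierCoeff G m := by
  rw [fourierCoeff_eq_intervalIntegral G m 0, fourierCoeffOne_eq, integral_circleMeasure]
  simp only [fourier_two_pi_coe, smul_eq_mul, Complex.real_smul, zero_add, mul_comm (G _)]
  push_cast
  simp

lemma eLpNorm_sq_le_lacEnergy {g : ℝ → ℂ} (hg : Integrable g circleMeasure)
    (hl : LacunaryFourier g) :
    eLpNorm g 1 circleMeasure ^ 2 ≤ ENNReal.ofReal (2 * Real.pi) ^ 2 * lacEnergy g := by
  have hT : ENNReal.ofReal (2 * Real.pi) ≠ 0 := by simp [Real.pi_pos]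
  by_cases hE : lacEnergy g = ∞
  · rw [hE, ENNReal.mul_top (pow_ne_zero _ hT)]
    exact le_top
  have hle := tsum_sq_fourierCoeffOne_le hl
  have hsum : Summable fun m => ‖fourierCoeffOne g m‖ ^ 2 := by
    have h := ENNReal.summable_toReal (ne_top_of_le_ne_top hE hle)
    simpa [ENNReal.toReal_pow] using h
  have hmem : Memℓp (fourierCoeffOne g) 2 := by
    refine memℓp_gen ?_
    simpa using hsum
  set G := (fourierBasis (T := 2 * Real.pi)).repr.symm ⟨_, hmem⟩ with hGdef
  have hGc : ∀ m, fourierCoeff G m = fourierCoeffOne g m := by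
    intro m
    rw [← fourierBasis_repr, hGdef, LinearIsometryEquiv.apply_symm_apply]
  have hGm : AEStronglyMeasurable G (AddCircle.haarAddCircle (T := 2 * Real.pi)) :=
    Lp.aestronglyMeasurable G
  have hGm' : AEStronglyMeasurable G (volume : Measure (AddCircle (2 * Real.pi))) := by
    rw [AddCircle.volume_eq_smul_haarAddCircle]
    exact hGm.smul_measure _
  have h12 : eLpNorm G 1 (AddCircle.haarAddCircle (T := 2 * Real.pi)) ≤
      eLpNorm G 2 AddCircle.haarAddCircle :=
    eLpNorm_le_eLpNorm_of_exponent_le (by norm_num) hGm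
  have hmeas : AEStronglyMeasurable (fun x : ℝ => G x) circleMeasure := by
    have hmp := AddCircle.measurePreserving_mk (2 * Real.pi) 0
    rw [zero_add, restrict_Ioc_eq_restrict_Icc] at hmp
    exact hGm'.comp_measurePreserving hmp
  have hn := eLpNorm_one_comp_coe G hGm'
  have hfin : eLpNorm (fun x : ℝ => G x) 1 circleMeasure < ∞ := by
    rw [hn]
    exact ENNReal.mul_lt_top ENNReal.ofReal_lt_top (h12.trans_lt (Lp.eLpNorm_lt_top G))
  have hGi : Integrable (fun x : ℝ => G x) circleMeasure :=
    memLp_one_iff_integrable.mp ⟨hmeas, hfin⟩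
  have hae : g =ᵐ[circleMeasure] fun x : ℝ => G x := by
    have := ae_eq_zero_of_fourierCoeffOne_eq_zero (hg.sub hGi) fun m => by
      have h1 := fourierCoeffOne_comp_coe G m
      rw [hGc, fourierCoeffOne_eq] at h1
      rw [fourierCoeffOne_eq]
      simp only [Pi.sub_apply, sub_mul]
      rw [integral_sub (hg.mul_circleExp _) (hGi.mul_circleExp _), mul_sub, h1,
        ← fourierCoeffOne_eq, sub_self]
    filter_upwards [this] with x hx
    exact sub_eq_zero.mp hx
  rw [eLpNorm_congr_ae hae, hn, mul_pow]
  gcongr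
  calc eLpNorm G 1 AddCircle.haarAddCircle ^ 2 ≤ eLpNorm G 2 AddCircle.haarAddCircle ^ 2 := by
        gcongr
    _ = ∑' m : ℤ, ‖fourierCoeffOne g m‖ₑ ^ 2 := by
        rw [← Lp.enorm_def, ← ofReal_norm, hGdef, LinearIsometryEquiv.norm_map,
          ← ENNReal.ofReal_pow (norm_nonneg _)]
        have h := lp.norm_rpow_eq_tsum (p := 2) (by norm_num)
          (⟨_, hmem⟩ : lp (fun _ : ℤ => ℂ) 2)
        simp only [ENNReal.toReal_ofNat, Real.rpow_ofNat] at h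
        rw [h, ENNReal.ofReal_tsum_of_nonneg (fun _ => by positivity) hsum]
        simp [ENNReal.ofReal_pow]
    _ ≤ lacEnergy g := hle

/-! ### The binomial series on the closed unit disc -/

lemma gBinom_eq_choose (α : ℝ) (n : ℕ) : gBinom α n = Ring.choose α n := by
  induction n with
  | zero => simp [gBinom]
  | succ n ih =>
    have h1 := Ring.descPochhammer_eq_factorial_smul_choose α (n + 1)
    rw [descPochhammer_succ_right, Polynomial.smeval_mul,
      Ring.descPochhammer_eq_factorial_smul_choose] at h1
    simp only [Polynomial.smeval_sub, Polynomial.smeval_X, Polynomial.smeval_natCast, pow_one,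
      pow_zero, nsmul_eq_mul, mul_one, Nat.factorial_succ, Nat.cast_mul, Nat.cast_succ] at h1
    have hn : (n.factorial : ℝ) ≠ 0 := by exact_mod_cast n.factorial_ne_zero
    rw [gBinom, ih, div_eq_iff (by positivity)]
    refine mul_left_cancel₀ hn ?_
    linarith

lemma summable_abs_gBinom {α : ℝ} (hα : 0 < α) : Summable fun ν => |gBinom α ν| := by
  obtain ⟨M, hM⟩ := exists_nat_ge α
  have hrec : ∀ ν ≥ M, α * |gBinom α ν| = ν * |gBinom α ν| -
      (ν + 1 : ℕ) * |gBinom α (ν + 1)| := by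
    intro ν hν
    have h1 : α ≤ ν := hM.trans (by exact_mod_cast hν)
    have h2 : (0 : ℝ) < ν + 1 := by positivity
    rw [gBinom, abs_div, abs_mul, abs_of_pos h2, abs_of_nonpos (sub_nonpos.mpr h1)]
    push_cast
    field_simp
    ring
  rw [← summable_nat_add_iff M]
  refine summable_of_sum_range_le (c := M * |gBinom α M| / α) (fun _ => abs_nonneg _) fun K => ?_
  have key : α * ∑ i ∈ Finset.range K, |gBinom α (i + M)| =
      M * |gBinom α M| - (K + M : ℕ) * |gBinom α (K + M)| := by
    induction K with
    | zero => simp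
    | succ K ih =>
      rw [Finset.sum_range_succ, mul_add, ih, hrec _ (Nat.le_add_left M K),
        Nat.add_right_comm K 1 M]
      ring
  rw [le_div_iff₀ hα, mul_comm, key]
  have : 0 ≤ ((K + M : ℕ) : ℝ) * |gBinom α (K + M)| := by positivity
  linarith

lemma hasSum_gBinom (α : ℝ) {w : ℂ} (hw : ‖w‖ < 1) :
    HasSum (fun ν => ((((-1) ^ ν * gBinom α ν : ℝ) : ℂ) * w ^ ν)) ((1 - w) ^ (α : ℂ)) := by
  have h := (Complex.one_add_cpow_hasFPowerSeriesOnBall_zero (a := (α : ℂ))).hasSum (y := -w)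
    (by
      rw [Metric.mem_eball, edist_zero_right, enorm_neg, ← ofReal_norm]
      exact ENNReal.ofReal_lt_one.mpr hw)
  simp only [binomialSeries_apply, List.ofFn_const, List.prod_replicate, zero_add,
    smul_eq_mul] at h
  rw [← sub_eq_add_neg] at h
  refine (congrArg (HasSum · ((1 - w) ^ (α : ℂ))) (funext fun ν => ?_)).mpr h
  rw [gBinom_eq_choose, ← Complex.ofReal_choose, neg_pow w]
  push_cast
  ring

lemma norm_tsum_gBinom {α : ℝ} (hα : 0 < α) {z : ℂ} (hz : ‖z‖ = 1) :
    ‖∑' ν, (((-1) ^ ν * gBinom α ν : ℝ) : ℂ) * z ^ ν‖ = ‖1 - z‖ ^ α := by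
  have h1 : ContinuousOn (fun w : ℂ => ∑' ν, (((-1) ^ ν * gBinom α ν : ℝ) : ℂ) * w ^ ν)
      (Metric.closedBall 0 1) := by
    refine continuousOn_tsum (fun ν => by fun_prop) (summable_abs_gBinom hα) fun ν w hw => ?_
    rw [mem_closedBall_zero_iff] at hw
    rw [norm_mul, Complex.norm_real, norm_mul, norm_pow, norm_neg, norm_one, one_pow, one_mul,
      norm_pow, Real.norm_eq_abs]
    exact mul_le_of_le_one_right (abs_nonneg _) (pow_le_one₀ (norm_nonneg _) hw)
  have h2 : ContinuousOn (fun w : ℂ => ‖1 - w‖ ^ α) (Metric.closedBall 0 1) :=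
    (continuous_const.sub continuous_id).norm.continuousOn.rpow_const fun _ _ => Or.inr hα.le
  have heq : Set.EqOn (fun w : ℂ => ‖∑' ν, (((-1) ^ ν * gBinom α ν : ℝ) : ℂ) * w ^ ν‖)
      (fun w : ℂ => ‖1 - w‖ ^ α) (Metric.ball 0 1) := by
    intro w hw
    rw [mem_ball_zero_iff] at hw
    simp only
    rw [(hasSum_gBinom α hw).tsum_eq, Complex.norm_cpow_real]
  refine heq.of_subset_closure h1.norm h2 Metric.ball_subset_closedBall ?_ (?_ : z ∈ _)
  · rw [closure_ball _ one_ne_zero]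
  · simp [hz]

/-! ### Fourier coefficients of fractional differences -/

lemma integral_norm_comp_add {f : ℝ → ℂ} (hp : Periodic2PiOne f) (a : ℝ) :
    ∫ x, ‖f (x + a)‖ ∂circleMeasure = ∫ x, ‖f x‖ ∂circleMeasure := by
  have hper : Function.Periodic (fun x => ‖f x‖) (2 * Real.pi) := fun x => by
    simp only
    rw [hp x]
  rw [integral_circleMeasure, integral_circleMeasure,
    intervalIntegral.integral_comp_add_right (fun x => ‖f x‖), zero_add, add_comm _ a,
    hper.intervalIntegral_add_eq a 0, zero_add]

lemma integrable_comp_add {f : ℝ → ℂ} (hp : Periodic2PiOne f) (hf : Integrable f circleMeasure)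
    (a : ℝ) : Integrable (fun x => f (x + a)) circleMeasure := by
  rw [integrable_circleMeasure_iff] at hf ⊢
  have hper : Function.Periodic f (2 * Real.pi) := hp
  simpa using
    (hper.intervalIntegrable₀ Real.two_pi_pos.ne' hf (0 + a) (2 * Real.pi + a)).comp_add_right a

lemma fourierCoeffOne_comp_add {f : ℝ → ℂ} (hp : Periodic2PiOne f) (a : ℝ) (m : ℤ) :
    fourierCoeffOne (fun x => f (x + a)) m = circleExp m a * fourierCoeffOne f m := by
  have hper : Function.Periodic (fun x => f x * circleExp (-m) x) (2 * Real.pi) := fun x => by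
    simp only
    rw [hp x, circleExp_add_right, circleExp_two_pi, mul_one]
  have h1 : ∀ x, f (x + a) * circleExp (-m) x =
      circleExp m a * (f (x + a) * circleExp (-m) (x + a)) := by
    intro x
    have : circleExp m a * circleExp (-m) a = 1 := by
      rw [← circleExp_add, add_neg_cancel, circleExp_zero]
    rw [circleExp_add_right]
    linear_combination (-(f (x + a) * circleExp (-m) x)) * this
  rw [fourierCoeffOne_eq, fourierCoeffOne_eq]
  simp only [h1]
  rw [integral_const_mul, integral_circleMeasure, integral_circleMeasure,
    intervalIntegral.integral_comp_add_right (fun x => f x * circleExp (-m) x), zero_add,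
    add_comm _ a, hper.intervalIntegral_add_eq a 0, zero_add]
  ring

lemma integrable_tsum_of_summable_integral_norm {X : Type*} [MeasurableSpace X] {μ : Measure X}
    {F : ℕ → X → ℂ} (hF : ∀ i, Integrable (F i) μ)
    (hs : Summable fun i => ∫ x, ‖F i x‖ ∂μ) : Integrable (fun x => ∑' i, F i x) μ := by
  have hne : ∑' i, eLpNorm (F i) 1 μ ≠ ∞ := by
    have : ∀ i, eLpNorm (F i) 1 μ = ENNReal.ofReal (∫ x, ‖F i x‖ ∂μ) := fun i => by
      rw [eLpNorm_one_eq_lintegral_enorm, ofReal_integral_norm_eq_lintegral_enorm (hF i)]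
    simp only [this]
    rw [← ENNReal.ofReal_tsum_of_nonneg (fun i => integral_nonneg fun _ => norm_nonneg _) hs]
    exact ENNReal.ofReal_ne_top
  have hsum := summable_norm_of_tsum_eLpNorm_ne_top le_rfl
    (fun i => (hF i).aestronglyMeasurable) hne
  refine ⟨aestronglyMeasurable_of_tendsto_ae Filter.atTop
    (f := fun n x => ∑ i ∈ Finset.range n, F i x) (fun n => ?_) ?_, ?_⟩
  · exact (integrable_finsetSum _ fun i _ => hF i).aestronglyMeasurable
  · filter_upwards [hsum] with x hx
    exact hx.of_norm.hasSum.tendsto_sum_nat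
  · refine lt_of_le_of_lt (lintegral_mono fun x => enorm_tsum_le_tsum_enorm) ?_
    rw [lintegral_tsum fun i => (hF i).aestronglyMeasurable.enorm]
    simp only [eLpNorm_one_eq_lintegral_enorm] at hne
    exact hne.lt_top

section FracDiff

variable {α : ℝ} {f : ℝ → ℂ}

lemma integrable_fracDiffOne_term (hp : Periodic2PiOne f) (hf : Integrable f circleMeasure)
    (h : ℝ) (ν : ℕ) :
    Integrable (fun x => ((-1 : ℝ) ^ ν * gBinom α ν) • f (x + (α - ν) * h)) circleMeasure :=
  (integrable_comp_add hp hf ((α - ν) * h)).smul ((-1 : ℝ) ^ ν * gBinom α ν)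

lemma integral_norm_fracDiffOne_term (hp : Periodic2PiOne f) (h : ℝ) (ν : ℕ) :
    ∫ x, ‖((-1 : ℝ) ^ ν * gBinom α ν) • f (x + (α - ν) * h)‖ ∂circleMeasure =
      |gBinom α ν| * ∫ x, ‖f x‖ ∂circleMeasure := by
  simp only [norm_smul, norm_mul, norm_pow, norm_neg, norm_one, one_pow, one_mul,
    Real.norm_eq_abs]
  rw [integral_const_mul, integral_norm_comp_add hp]

lemma integrable_fracDiffOne (hα : 0 < α) (hp : Periodic2PiOne f)
    (hf : Integrable f circleMeasure) (h : ℝ) :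
    Integrable (fracDiffOne α h f) circleMeasure := by
  refine integrable_tsum_of_summable_integral_norm (integrable_fracDiffOne_term hp hf h) ?_
  simp only [integral_norm_fracDiffOne_term hp]
  exact (summable_abs_gBinom hα).mul_right _

lemma fourierCoeffOne_fracDiffOne (hα : 0 < α) (hp : Periodic2PiOne f)
    (hf : Integrable f circleMeasure) (h : ℝ) (m : ℤ) :
    fourierCoeffOne (fracDiffOne α h f) m = circleExp m (α * h) *
      (∑' ν, (((-1) ^ ν * gBinom α ν : ℝ) : ℂ) * circleExp (-m) h ^ ν) * fourierCoeffOne f m := by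
  have hi : ∀ ν, Integrable (fun x => ((-1 : ℝ) ^ ν * gBinom α ν) • f (x + (α - ν) * h) *
      circleExp (-m) x) circleMeasure := fun ν =>
    (integrable_fracDiffOne_term hp hf h ν).mul_circleExp (-m)
  have hs : Summable fun ν => ∫ x, ‖((-1 : ℝ) ^ ν * gBinom α ν) • f (x + (α - ν) * h) *
      circleExp (-m) x‖ ∂circleMeasure := by
    simp only [norm_mul _ (circleExp _ _), norm_circleExp, mul_one,
      integral_norm_fracDiffOne_term hp]
    exact (summable_abs_gBinom hα).mul_right _
  have h_integral := integral_tsum_of_summable_integral_norm hi hs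
  simp only [tsum_mul_right] at h_integral
  rw [fourierCoeffOne_eq]
  unfold fracDiffOne
  rw [← h_integral, ← tsum_mul_left, ← tsum_mul_left, ← tsum_mul_right]
  congr 1
  ext ν
  have h1 := fourierCoeffOne_comp_add hp ((α - ν) * h) m
  rw [fourierCoeffOne_eq] at h1
  simp only [Complex.real_smul, mul_assoc (((-1 : ℝ) ^ ν * gBinom α ν : ℝ) : ℂ)]
  rw [integral_const_mul, mul_left_comm, h1]
  have h2 : circleExp m ((α - ν) * h) = circleExp m (α * h) * circleExp (-m) h ^ ν := by
    simp only [circleExp]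
    rw [← Complex.exp_nat_mul, ← Complex.exp_add]
    push_cast
    ring_nf
  rw [h2]
  ring

lemma norm_fourierCoeffOne_fracDiffOne (hα : 0 < α) (hp : Periodic2PiOne f)
    (hf : Integrable f circleMeasure) (h : ℝ) (m : ℤ) :
    ‖fourierCoeffOne (fracDiffOne α h f) m‖ =
      ‖1 - circleExp (-m) h‖ ^ α * ‖fourierCoeffOne f m‖ := by
  rw [fourierCoeffOne_fracDiffOne hα hp hf, norm_mul, norm_mul, norm_circleExp, one_mul,
    norm_tsum_gBinom hα (norm_circleExp _ _)]

end FracDiff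

/-! ### Size of the multiplier of a difference -/

lemma norm_one_sub_circleExp (m : ℤ) (h : ℝ) :
    ‖1 - circleExp m h‖ = 2 * |Real.sin (m * h / 2)| := by
  have := Complex.norm_exp_I_mul_ofReal_sub_one (m * h)
  rw [norm_sub_rev, circleExp, mul_assoc]
  push_cast at this
  rw [this, norm_mul]
  simp

lemma norm_one_sub_circleExp_eq_of_abs {m : ℤ} {j : ℕ} (hm : |m| = 2 ^ j) (h : ℝ) :
    ‖1 - circleExp m h‖ = 2 * |Real.sin (2 ^ j * h / 2)| := by
  rw [norm_one_sub_circleExp]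
  rcases abs_choice m with h1 | h1 <;> rw [h1] at hm
  · rw [hm]
    push_cast
    rfl
  · rw [neg_eq_iff_eq_neg.mp hm]
    push_cast
    rw [neg_mul, neg_div, Real.sin_neg, abs_neg]

lemma half_pow_sub (n j : ℕ) (hjn : j ≤ n) : (1 / 2 : ℝ) ^ (n - j) = 2 ^ j / 2 ^ n := by
  rw [one_div, inv_pow, eq_div_iff (by positivity), inv_mul_eq_iff_eq_mul₀ (by positivity),
    ← pow_add, Nat.sub_add_cancel hjn]

lemma norm_one_sub_circleExp_le {n j : ℕ} {m : ℤ} {h : ℝ} (hh : |h| ≤ 1 / 2 ^ n)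
    (hm : |m| = 2 ^ j) : ‖1 - circleExp m h‖ ≤ 2 * (1 / 2) ^ (n - j) := by
  rw [norm_one_sub_circleExp_eq_of_abs hm]
  gcongr
  rcases le_total n j with hnj | hjn
  · rw [Nat.sub_eq_zero_of_le hnj, pow_zero]
    exact Real.abs_sin_le_one _
  · rw [half_pow_sub n j hjn]
    calc |Real.sin (2 ^ j * h / 2)| ≤ |2 ^ j * h / 2| := Real.abs_sin_le_abs
      _ ≤ |2 ^ j * h| := by
        rw [abs_div, abs_two]
        linarith [abs_nonneg (2 ^ j * h)]
      _ = 2 ^ j * |h| := by rw [abs_mul, abs_of_pos (by positivity)]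
      _ ≤ 2 ^ j * (1 / 2 ^ n) := by gcongr
      _ = 2 ^ j / 2 ^ n := by ring

lemma cos_two_pow_mul_two_pi_div_three (i : ℕ) :
    Real.cos (2 ^ i * (2 * Real.pi / 3)) = -1 / 2 := by
  induction i with
  | zero =>
    rw [pow_zero, one_mul, show 2 * Real.pi / 3 = 2 * (Real.pi / 3) by ring, Real.cos_two_mul,
      Real.cos_pi_div_three]
    norm_num
  | succ i ih =>
    rw [pow_succ', mul_assoc, Real.cos_two_mul, ih]
    norm_num

lemma le_norm_one_sub_circleExp {n j : ℕ} {m : ℤ} (hm : |m| = 2 ^ j) :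
    (1 / 3) * (1 / 2) ^ (n - j) ≤ ‖1 - circleExp m (Real.pi / 6 / 2 ^ n)‖ := by
  rw [norm_one_sub_circleExp_eq_of_abs hm]
  have hn : (0 : ℝ) < 2 ^ n := by positivity
  rcases le_or_gt j (n + 1) with hj | hj
  · have h1 : (1 / 2 : ℝ) ^ (n - j) ≤ 2 ^ j / 2 ^ n := by
      rcases le_total n j with hnj | hjn
      · rw [Nat.sub_eq_zero_of_le hnj, pow_zero, le_div_iff₀ hn, one_mul]
        exact pow_le_pow_right₀ one_le_two hnj
      · rw [half_pow_sub n j hjn]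
    have h2 : (2 : ℝ) ^ j / 2 ^ n ≤ 2 := by
      rw [div_le_iff₀ hn, ← pow_succ']
      exact pow_le_pow_right₀ one_le_two hj
    have hx : (2 : ℝ) ^ j * (Real.pi / 6 / 2 ^ n) / 2 = 2 ^ j / 2 ^ n * (Real.pi / 12) := by ring
    rw [hx]
    set t := (2 : ℝ) ^ j / 2 ^ n
    have ht : 0 ≤ t := by positivity
    have h3 := Real.mul_le_sin (x := t * (Real.pi / 12)) (by positivity)
      (by nlinarith [Real.pi_pos])
    have h4 : 2 / Real.pi * (t * (Real.pi / 12)) = t / 6 := by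
      field_simp
      ring
    rw [h4] at h3
    linarith [le_abs_self (Real.sin (t * (Real.pi / 12)))]
  · obtain ⟨i, rfl⟩ := Nat.exists_eq_add_of_le (show n + 2 ≤ j by omega)
    rw [show n - (n + 2 + i) = 0 by omega, pow_zero]
    have hx : (2 : ℝ) ^ (n + 2 + i) * (Real.pi / 6 / 2 ^ n) = 2 ^ i * (2 * Real.pi / 3) := by
      rw [pow_add, pow_add]
      field_simp
      norm_num
    rw [hx]
    have h1 := cos_two_pow_mul_two_pi_div_three i
    set s := Real.sin (2 ^ i * (2 * Real.pi / 3) / 2)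
    have h2 : s ^ 2 = 3 / 4 := by
      have h := Real.cos_sq' (2 ^ i * (2 * Real.pi / 3) / 2)
      rw [Real.cos_sq, mul_div_cancel₀ _ two_ne_zero, h1] at h
      linarith
    rw [← sq_abs] at h2
    nlinarith [abs_nonneg s]

/-! ### Weighted energies -/

lemma lacEnergy_le_tsum {f g : ℝ → ℂ} {w : ℕ → ℝ≥0∞}
    (h : ∀ (j : ℕ) (m : ℤ), |m| = 2 ^ j →
      ‖fourierCoeffOne g m‖ₑ ≤ w j * ‖fourierCoeffOne f m‖ₑ) :
    lacEnergy g ≤ ∑' j : ℕ, w j ^ 2 *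
      (‖fourierCoeffOne f (2 ^ j)‖ₑ ^ 2 + ‖fourierCoeffOne f (-2 ^ j)‖ₑ ^ 2) := by
  refine ENNReal.tsum_le_tsum fun j => ?_
  have hpos : (0 : ℤ) < 2 ^ j := by positivity
  rw [mul_add, ← mul_pow, ← mul_pow]
  gcongr
  · exact h j _ (abs_of_pos hpos)
  · exact h j _ (by rw [abs_neg, abs_of_pos hpos])

lemma tsum_le_lacEnergy {f g : ℝ → ℂ} {w : ℕ → ℝ≥0∞}
    (h : ∀ (j : ℕ) (m : ℤ), |m| = 2 ^ j →
      w j * ‖fourierCoeffOne f m‖ₑ ≤ ‖fourierCoeffOne g m‖ₑ) :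
    ∑' j : ℕ, w j ^ 2 *
      (‖fourierCoeffOne f (2 ^ j)‖ₑ ^ 2 + ‖fourierCoeffOne f (-2 ^ j)‖ₑ ^ 2) ≤ lacEnergy g := by
  refine ENNReal.tsum_le_tsum fun j => ?_
  have hpos : (0 : ℤ) < 2 ^ j := by positivity
  rw [mul_add, ← mul_pow, ← mul_pow]
  gcongr
  · exact h j _ (abs_of_pos hpos)
  · exact h j _ (by rw [abs_neg, abs_of_pos hpos])

/-- `∑_j min(1, 2^{j-n})^{2α} (|f̂(2^j)|² + |f̂(-2^j)|²)`. -/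
noncomputable def weightedEnergy (α : ℝ) (n : ℕ) (f : ℝ → ℂ) : ℝ≥0∞ :=
  ∑' j : ℕ, (((2 : ℝ≥0∞) ^ (-α)) ^ (n - j)) ^ 2 *
    (‖fourierCoeffOne f (2 ^ j)‖ₑ ^ 2 + ‖fourierCoeffOne f (-2 ^ j)‖ₑ ^ 2)

lemma LacunaryFourier.of_coeff {f g : ℝ → ℂ} (hl : LacunaryFourier f)
    (h : ∀ m, fourierCoeffOne f m = 0 → fourierCoeffOne g m = 0) : LacunaryFourier g :=
  fun m hm => h m (hl m hm)

lemma ofReal_mul_half_pow_rpow {α c : ℝ} (hc : 0 ≤ c) (i : ℕ) :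
    ENNReal.ofReal ((c * (1 / 2) ^ i) ^ α) =
      ENNReal.ofReal (c ^ α) * ((2 : ℝ≥0∞) ^ (-α)) ^ i := by
  rw [Real.mul_rpow hc (by positivity), ENNReal.ofReal_mul (by positivity)]
  congr 1
  rw [← Real.rpow_natCast, ← Real.rpow_mul (by norm_num), mul_comm, Real.rpow_mul (by norm_num),
    Real.rpow_natCast, ENNReal.ofReal_pow (by positivity), one_div,
    Real.inv_rpow zero_le_two, ← Real.rpow_neg zero_le_two,
    ← ENNReal.ofReal_rpow_of_pos two_pos, ENNReal.ofReal_ofNat]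

section Modulus

variable {α : ℝ} {f : ℝ → ℂ}

lemma lacunaryFourier_fracDiffOne (hα : 0 < α) (hp : Periodic2PiOne f)
    (hf : Integrable f circleMeasure) (hl : LacunaryFourier f) (h : ℝ) :
    LacunaryFourier (fracDiffOne α h f) :=
  hl.of_coeff fun m hm => by rw [fourierCoeffOne_fracDiffOne hα hp hf, hm, mul_zero]

lemma fracModSmoothOne_sq_le (hα : 0 < α) (hp : Periodic2PiOne f)
    (hf : Integrable f circleMeasure) (hl : LacunaryFourier f) (n : ℕ) :
    fracModSmoothOne α 1 f (1 / 2 ^ n) ^ 2 ≤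
      ENNReal.ofReal (2 * Real.pi) ^ 2 * (ENNReal.ofReal (2 ^ α) ^ 2 * weightedEnergy α n f) := by
  have key : ∀ h : {h : ℝ // |h| ≤ 1 / 2 ^ n},
      eLpNorm (fracDiffOne α h.1 f) 1 circleMeasure ^ 2 ≤
      ENNReal.ofReal (2 * Real.pi) ^ 2 * (ENNReal.ofReal (2 ^ α) ^ 2 * weightedEnergy α n f) := by
    rintro ⟨h, hh⟩
    refine (eLpNorm_sq_le_lacEnergy (integrable_fracDiffOne hα hp hf h)
      (lacunaryFourier_fracDiffOne hα hp hf hl h)).trans ?_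
    gcongr
    refine (lacEnergy_le_tsum (f := f)
      (w := fun j => ENNReal.ofReal (2 ^ α) * ((2 : ℝ≥0∞) ^ (-α)) ^ (n - j))
      fun j m hm => ?_).trans_eq ?_
    · rw [← ofReal_norm, norm_fourierCoeffOne_fracDiffOne hα hp hf,
        ENNReal.ofReal_mul (by positivity), ofReal_norm,
        ← ofReal_mul_half_pow_rpow zero_le_two]
      gcongr
      exact norm_one_sub_circleExp_le hh (by rw [abs_neg, hm])
    · rw [weightedEnergy, ← ENNReal.tsum_mul_left]
      simp only [mul_pow, mul_assoc]
  rw [fracModSmoothOne]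
  have h2 : ∀ a b : ℝ≥0∞, a ^ 2 ≤ b ↔ a ≤ b ^ ((1 : ℝ) / 2) := fun a b => by
    rw [one_div, ENNReal.le_rpow_inv_iff two_pos, ENNReal.rpow_two]
  rw [h2]
  exact iSup_le fun h => (h2 _ _).mp (key h)

lemma weightedEnergy_le (hα : 0 < α) (hp : Periodic2PiOne f)
    (hf : Integrable f circleMeasure) (hl : LacunaryFourier f) (n : ℕ) :
    ENNReal.ofReal ((1 / 3) ^ α) ^ 2 * weightedEnergy α n f ≤
      4 * fracModSmoothOne α 1 f (1 / 2 ^ n) ^ 2 := by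
  set h₀ := Real.pi / 6 / 2 ^ n with hh₀
  have hle : |h₀| ≤ 1 / 2 ^ n := by
    rw [hh₀, abs_of_nonneg (by positivity)]
    gcongr
    linarith [Real.pi_le_four]
  calc _ = ∑' j : ℕ, (ENNReal.ofReal ((1 / 3) ^ α) * ((2 : ℝ≥0∞) ^ (-α)) ^ (n - j)) ^ 2 *
        (‖fourierCoeffOne f (2 ^ j)‖ₑ ^ 2 + ‖fourierCoeffOne f (-2 ^ j)‖ₑ ^ 2) := by
        rw [weightedEnergy, ← ENNReal.tsum_mul_left]
        simp only [mul_pow, mul_assoc]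
    _ ≤ lacEnergy (fracDiffOne α h₀ f) := by
        refine tsum_le_lacEnergy fun j m hm => ?_
        rw [← ofReal_norm (fourierCoeffOne (fracDiffOne α h₀ f) m),
          norm_fourierCoeffOne_fracDiffOne hα hp hf,
          ENNReal.ofReal_mul (by positivity), ofReal_norm,
          ← ofReal_mul_half_pow_rpow (by norm_num)]
        gcongr
        exact le_norm_one_sub_circleExp (by rw [abs_neg, hm])
    _ ≤ 4 * eLpNorm (fracDiffOne α h₀ f) 1 circleMeasure ^ 2 :=
        lacEnergy_le (integrable_fracDiffOne hα hp hf h₀)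
          (lacunaryFourier_fracDiffOne hα hp hf hl h₀)
    _ ≤ _ := by
        gcongr
        exact le_iSup (fun h : {h : ℝ // |h| ≤ 1 / 2 ^ n} =>
          eLpNorm (fracDiffOne α h.1 f) 1 circleMeasure) ⟨h₀, hle⟩

end Modulus

/-! ### Weyl derivatives of de la Vallée Poussin means -/

section VallePoussin

variable {η : ℝ → ℝ}

/-- The Fourier multiplier of `vdpWeylOne`. -/
noncomputable def vdpWeylMultiplier (η : ℝ → ℝ) (α : ℝ) (N : ℕ) (m : ℤ) : ℂ :=
  (if m = 0 then 0 else (Complex.I * (m : ℂ)) ^ (α : ℂ)) * ((η (|(m : ℝ)| / N) : ℝ) : ℂ)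

lemma vdpWeylMultiplier_eq_zero (hη : ∀ ξ : ℝ, 1 ≤ ξ → η ξ = 0) (α : ℝ) {N : ℕ} (hN : 0 < N)
    {m : ℤ} (hm : m ∉ Finset.Ioo (-(N : ℤ)) N) : vdpWeylMultiplier η α N m = 0 := by
  rw [vdpWeylMultiplier, hη, Complex.ofReal_zero, mul_zero]
  rw [one_le_div (by exact_mod_cast hN)]
  rw [Finset.mem_Ioo, ← abs_lt, not_lt] at hm
  exact_mod_cast hm

lemma vdpWeylOne_eq_sum (hη : ∀ ξ : ℝ, 1 ≤ ξ → η ξ = 0) (α : ℝ) {N : ℕ} (hN : 0 < N)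
    (f : ℝ → ℂ) : vdpWeylOne η α N f = fun x => ∑ m ∈ Finset.Ioo (-(N : ℤ)) N,
      vdpWeylMultiplier η α N m * fourierCoeffOne f m * circleExp m x := by
  funext x
  refine tsum_eq_sum fun m hm => ?_
  rw [← vdpWeylMultiplier, vdpWeylMultiplier_eq_zero hη α hN hm, zero_mul, zero_mul]

lemma integrable_const_mul_circleExp (c : ℂ) (m : ℤ) :
    Integrable (fun x => c * circleExp m x) circleMeasure :=
  (integrable_const c).mul_circleExp m

lemma integrable_vdpWeylOne (hη : ∀ ξ : ℝ, 1 ≤ ξ → η ξ = 0) (α : ℝ) {N : ℕ} (hN : 0 < N)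
    (f : ℝ → ℂ) : Integrable (vdpWeylOne η α N f) circleMeasure := by
  rw [vdpWeylOne_eq_sum hη α hN]
  exact integrable_finsetSum _ fun m _ => integrable_const_mul_circleExp _ m

lemma fourierCoeffOne_vdpWeylOne (hη : ∀ ξ : ℝ, 1 ≤ ξ → η ξ = 0) (α : ℝ) {N : ℕ} (hN : 0 < N)
    (f : ℝ → ℂ) (m : ℤ) : fourierCoeffOne (vdpWeylOne η α N f) m =
      vdpWeylMultiplier η α N m * fourierCoeffOne f m := by
  rw [fourierCoeffOne_eq, vdpWeylOne_eq_sum hη α hN]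
  have h1 : ∀ x, (∑ k ∈ Finset.Ioo (-(N : ℤ)) N,
      vdpWeylMultiplier η α N k * fourierCoeffOne f k * circleExp k x) * circleExp (-m) x =
      ∑ k ∈ Finset.Ioo (-(N : ℤ)) N,
        vdpWeylMultiplier η α N k * fourierCoeffOne f k * circleExp (k - m) x := fun x => by
    rw [Finset.sum_mul]
    refine Finset.sum_congr rfl fun k _ => ?_
    rw [mul_assoc, ← circleExp_add, sub_eq_add_neg]
  simp_rw [h1]
  rw [integral_finsetSum _ fun k _ => integrable_const_mul_circleExp _ _]
  simp_rw [integral_const_mul, integral_circleExp, sub_eq_zero, mul_ite, mul_zero,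
    Finset.sum_ite_eq']
  split_ifs with hm
  · field_simp
  · rw [vdpWeylMultiplier_eq_zero hη α hN hm, zero_mul, mul_zero]

lemma enorm_vdpWeylMultiplier (hη_one : ∀ ξ : ℝ, ξ ≤ 1 / 2 → η ξ = 1)
    (hη_zero : ∀ ξ : ℝ, 1 ≤ ξ → η ξ = 0) (α : ℝ) (K : ℕ) {j : ℕ} {m : ℤ} (hm : |m| = 2 ^ j) :
    ‖vdpWeylMultiplier η α (2 ^ K) m‖ₑ = if j < K then ((2 : ℝ≥0∞) ^ α) ^ j else 0 := by
  have hm' : |(m : ℝ)| = 2 ^ j := by exact_mod_cast hm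
  have hm0 : m ≠ 0 := by
    rintro rfl
    exact (pow_ne_zero j two_ne_zero) (by simpa using hm.symm)
  rw [vdpWeylMultiplier, if_neg hm0, hm']
  push_cast
  split_ifs with hj
  · rw [hη_one, Complex.ofReal_one, mul_one, ← ofReal_norm, Complex.norm_cpow_real, norm_mul,
      Complex.norm_I, one_mul, Complex.norm_intCast, hm', ← ENNReal.ofReal_rpow_of_pos (by positivity),
      ENNReal.ofReal_pow zero_le_two, ENNReal.ofReal_ofNat, ← ENNReal.rpow_natCast,
      ← ENNReal.rpow_natCast, ← ENNReal.rpow_mul, ← ENNReal.rpow_mul, mul_comm]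
    rw [div_le_div_iff₀ (by positivity) two_pos, one_mul, ← pow_succ]
    exact pow_le_pow_right₀ one_le_two hj
  · rw [hη_zero, Complex.ofReal_zero, mul_zero, enorm_zero]
    rw [one_le_div (by positivity)]
    exact pow_le_pow_right₀ one_le_two (not_lt.mp hj)

lemma lacEnergy_vdpWeylOne (hη_one : ∀ ξ : ℝ, ξ ≤ 1 / 2 → η ξ = 1)
    (hη_zero : ∀ ξ : ℝ, 1 ≤ ξ → η ξ = 0) (α : ℝ) (K : ℕ) (f : ℝ → ℂ) :
    lacEnergy (vdpWeylOne η α (2 ^ K) f) =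
      ∑' j : ℕ, (if j < K then ((2 : ℝ≥0∞) ^ α) ^ j else 0) ^ 2 *
        (‖fourierCoeffOne f (2 ^ j)‖ₑ ^ 2 + ‖fourierCoeffOne f (-2 ^ j)‖ₑ ^ 2) := by
  have h : ∀ (j : ℕ) (m : ℤ), |m| = 2 ^ j → ‖fourierCoeffOne (vdpWeylOne η α (2 ^ K) f) m‖ₑ =
      (if j < K then ((2 : ℝ≥0∞) ^ α) ^ j else 0) * ‖fourierCoeffOne f m‖ₑ := fun j m hm => by
    rw [fourierCoeffOne_vdpWeylOne hη_zero α (by positivity), enorm_mul,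
      enorm_vdpWeylMultiplier hη_one hη_zero α K hm]
  exact le_antisymm (lacEnergy_le_tsum fun j m hm => (h j m hm).le)
    (tsum_le_lacEnergy fun j m hm => (h j m hm).ge)

lemma lacunaryFourier_vdpWeylOne (hη : ∀ ξ : ℝ, 1 ≤ ξ → η ξ = 0) (α : ℝ) {N : ℕ} (hN : 0 < N)
    {f : ℝ → ℂ} (hl : LacunaryFourier f) : LacunaryFourier (vdpWeylOne η α N f) :=
  hl.of_coeff fun m hm => by rw [fourierCoeffOne_vdpWeylOne hη α hN, hm, mul_zero]

end VallePoussin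

/-! ### Summation over dyadic scales -/

lemma pow_mul_ite_pow {P Q : ℝ≥0∞} (hPQ : P * Q = 1) (K j : ℕ) :
    Q ^ K * (if j < K then P ^ j else 0) = if j < K then Q ^ (K - j) else 0 := by
  split_ifs with h
  · conv_lhs => rw [← Nat.sub_add_cancel h.le, pow_add, mul_assoc, mul_comm (Q ^ j), ← mul_pow,
      hPQ, one_pow, mul_one]
  · rw [mul_zero]

lemma tsum_ite_pow_le (Q : ℝ≥0∞) (n j : ℕ) :
    ∑' k : ℕ, (if j < n + k then Q ^ (n + k - j) else 0) ^ 2 ≤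
      (1 - Q ^ 2)⁻¹ * (Q ^ (n - j)) ^ 2 := by
  have hinj : Function.Injective fun i : ℕ => (j - n) + i := add_right_injective _
  have hsupp : (Function.support fun k : ℕ => (if j < n + k then Q ^ (n + k - j) else 0) ^ 2) ⊆
      Set.range fun i : ℕ => (j - n) + i := by
    intro k hk
    refine ⟨k - (j - n), ?_⟩
    have : j < n + k := by
      by_contra h
      simp [h] at hk
    dsimp only
    omega
  rw [← hinj.tsum_eq hsupp, ← ENNReal.tsum_geometric, ← ENNReal.tsum_mul_right]
  refine ENNReal.tsum_le_tsum fun i => ?_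
  rw [← pow_mul, ← pow_mul, ← pow_add]
  split_ifs with h
  · rw [← pow_mul]
    refine le_of_eq ?_
    congr 1
    omega
  · simp

lemma le_tsum_ite_pow (Q : ℝ≥0∞) (n j : ℕ) :
    Q ^ 2 * (Q ^ (n - j)) ^ 2 ≤
      ∑' k : ℕ, (if j < n + k then Q ^ (n + k - j) else 0) ^ 2 := by
  refine le_of_eq_of_le ?_ (ENNReal.le_tsum (j - n + 1))
  rw [if_pos (by omega), ← mul_pow, ← pow_succ']
  congr 2
  omega

lemma tsum_lacEnergy_vdpWeylOne {η : ℝ → ℝ} (hη_one : ∀ ξ : ℝ, ξ ≤ 1 / 2 → η ξ = 1)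
    (hη_zero : ∀ ξ : ℝ, 1 ≤ ξ → η ξ = 0) (α : ℝ) (n : ℕ) (f : ℝ → ℂ) :
    ∑' k : ℕ, (((2 : ℝ≥0∞) ^ (-α)) ^ (n + k)) ^ 2 * lacEnergy (vdpWeylOne η α (2 ^ (n + k)) f) =
      ∑' j : ℕ, (∑' k : ℕ,
          (if j < n + k then ((2 : ℝ≥0∞) ^ (-α)) ^ (n + k - j) else 0) ^ 2) *
        (‖fourierCoeffOne f (2 ^ j)‖ₑ ^ 2 + ‖fourierCoeffOne f (-2 ^ j)‖ₑ ^ 2) := by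
  have hPQ : (2 : ℝ≥0∞) ^ α * 2 ^ (-α) = 1 := by
    rw [← ENNReal.rpow_add _ _ two_ne_zero ENNReal.ofNat_ne_top, add_neg_cancel,
      ENNReal.rpow_zero]
  simp_rw [lacEnergy_vdpWeylOne hη_one hη_zero, ← ENNReal.tsum_mul_left, ← mul_assoc, ← mul_pow,
    pow_mul_ite_pow hPQ, ← ENNReal.tsum_mul_right]
  exact ENNReal.tsum_comm

lemma two_rpow_neg_natCast_mul (α : ℝ) (N : ℕ) :
    (2 : ℝ≥0∞) ^ (-(N : ℝ) * α) = ((2 : ℝ≥0∞) ^ (-α)) ^ N := by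
  rw [← ENNReal.rpow_natCast, ← ENNReal.rpow_mul]
  congr 1
  ring

section Scales

variable {η : ℝ → ℝ} {f : ℝ → ℂ}

lemma tsum_vdpWeylOne_le (hη_one : ∀ ξ : ℝ, ξ ≤ 1 / 2 → η ξ = 1)
    (hη_zero : ∀ ξ : ℝ, 1 ≤ ξ → η ξ = 0) (α : ℝ) (hl : LacunaryFourier f) (n : ℕ) :
    ∑' k : ℕ, ((2 : ℝ≥0∞) ^ (-((n + k : ℕ) : ℝ) * α) *
        eLpNorm (vdpWeylOne η α (2 ^ (n + k)) f) 1 circleMeasure) ^ (2 : ℝ) ≤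
      ENNReal.ofReal (2 * Real.pi) ^ 2 * ((1 - ((2 : ℝ≥0∞) ^ (-α)) ^ 2)⁻¹ *
        weightedEnergy α n f) := by
  calc _ ≤ ∑' k : ℕ, ENNReal.ofReal (2 * Real.pi) ^ 2 * ((((2 : ℝ≥0∞) ^ (-α)) ^ (n + k)) ^ 2 *
        lacEnergy (vdpWeylOne η α (2 ^ (n + k)) f)) := by
        refine ENNReal.tsum_le_tsum fun k => ?_
        rw [two_rpow_neg_natCast_mul, ENNReal.rpow_two, mul_pow, mul_left_comm]
        gcongr
        exact eLpNorm_sq_le_lacEnergy (integrable_vdpWeylOne hη_zero α (by positivity) f)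
          (lacunaryFourier_vdpWeylOne hη_zero α (by positivity) hl)
    _ ≤ _ := by
        rw [ENNReal.tsum_mul_left, tsum_lacEnergy_vdpWeylOne hη_one hη_zero, weightedEnergy,
          ← ENNReal.tsum_mul_left (a := (1 - ((2 : ℝ≥0∞) ^ (-α)) ^ 2)⁻¹)]
        refine mul_le_mul_of_nonneg_left ?_ zero_le
        refine ENNReal.tsum_le_tsum fun j => ?_
        rw [← mul_assoc]
        gcongr
        exact tsum_ite_pow_le _ n j

lemma weightedEnergy_le_tsum_vdpWeylOne (hη_one : ∀ ξ : ℝ, ξ ≤ 1 / 2 → η ξ = 1)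
    (hη_zero : ∀ ξ : ℝ, 1 ≤ ξ → η ξ = 0) (α : ℝ) (hl : LacunaryFourier f) (n : ℕ) :
    ((2 : ℝ≥0∞) ^ (-α)) ^ 2 * weightedEnergy α n f ≤
      4 * ∑' k : ℕ, ((2 : ℝ≥0∞) ^ (-((n + k : ℕ) : ℝ) * α) *
        eLpNorm (vdpWeylOne η α (2 ^ (n + k)) f) 1 circleMeasure) ^ (2 : ℝ) := by
  calc _ ≤ ∑' k : ℕ, (((2 : ℝ≥0∞) ^ (-α)) ^ (n + k)) ^ 2 *
        lacEnergy (vdpWeylOne η α (2 ^ (n + k)) f) := by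
        rw [tsum_lacEnergy_vdpWeylOne hη_one hη_zero, weightedEnergy, ← ENNReal.tsum_mul_left]
        refine ENNReal.tsum_le_tsum fun j => ?_
        rw [← mul_assoc]
        gcongr
        exact le_tsum_ite_pow _ n j
    _ ≤ _ := by
        rw [← ENNReal.tsum_mul_left]
        refine ENNReal.tsum_le_tsum fun k => ?_
        rw [two_rpow_neg_natCast_mul, ENNReal.rpow_two, mul_pow, mul_left_comm]
        gcongr
        exact lacEnergy_le (integrable_vdpWeylOne hη_zero α (by positivity) f)
          (lacunaryFourier_vdpWeylOne hη_zero α (by positivity) hl)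

end Scales

/-- If `a x ≤ b y` in `ℝ≥0∞` with `a ≠ 0, ∞`, then `x ^ (1/2) ≤ (a⁻¹ b) ^ (1/2) y ^ (1/2)`. -/
lemma rpow_half_le_of_mul_le {a b x y : ℝ≥0∞} (ha : a ≠ 0) (ha' : a ≠ ∞) (h : a * x ≤ b * y) :
    x ^ ((1 : ℝ) / 2) ≤ (a⁻¹ * b) ^ ((1 : ℝ) / 2) * y ^ ((1 : ℝ) / 2) := by
  rw [← ENNReal.mul_rpow_of_nonneg _ _ (by norm_num)]
  gcongr
  calc x = a⁻¹ * (a * x) := by rw [← mul_assoc, ENNReal.inv_mul_cancel ha ha', one_mul]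
    _ ≤ a⁻¹ * b * y := by
      rw [mul_assoc]
      gcongr

lemma pow_two_rpow_half (x : ℝ≥0∞) : (x ^ 2) ^ ((1 : ℝ) / 2) = x := by
  rw [← ENNReal.rpow_two, ← ENNReal.rpow_mul]
  norm_num

/-- For `f ∈ L_1(𝕋)` with lacunary Fourier series and `α > 0`,
`ω_α(f,2^{-n})_1 ≍ (∑_{k=n}^∞ 2^{-2αk} ‖(η_{2^k}f)^{(α)}‖_1²)^{1/2}`. -/
theorem stmt16 (η : ℝ → ℝ) (hη_smooth : ContDiffOn ℝ (⊤ : ℕ∞) η (Set.Ici 0))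
    (hη_one : ∀ ξ : ℝ, ξ ≤ 1 / 2 → η ξ = 1) (hη_zero : ∀ ξ : ℝ, 1 ≤ ξ → η ξ = 0)
    (α : ℝ) (hα : 0 < α) :
    ∃ c C : ℝ≥0∞, 0 < c ∧ C ≠ ∞ ∧
      ∀ f : ℝ → ℂ, Periodic2PiOne f →
        AEStronglyMeasurable f circleMeasure →
        eLpNorm f 1 circleMeasure ≠ ∞ →
        LacunaryFourier f →
        ∀ n : ℕ, 1 ≤ n →
          c * (∑' k : ℕ,
                ((2 : ℝ≥0∞) ^ (-((n + k : ℕ) : ℝ) * α) *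
                  eLpNorm (vdpWeylOne η α (2 ^ (n + k)) f) 1 circleMeasure) ^ (2 : ℝ)) ^
              ((1 : ℝ) / 2)
            ≤ fracModSmoothOne α 1 f (1 / 2 ^ n) ∧
          fracModSmoothOne α 1 f (1 / 2 ^ n)
            ≤ C * (∑' k : ℕ,
                ((2 : ℝ≥0∞) ^ (-((n + k : ℕ) : ℝ) * α) *
                  eLpNorm (vdpWeylOne η α (2 ^ (n + k)) f) 1 circleMeasure) ^ (2 : ℝ)) ^
              ((1 : ℝ) / 2) := by
  have hq0 : (2 : ℝ≥0∞) ^ (-α) ≠ 0 := (ENNReal.rpow_pos two_pos ENNReal.ofNat_ne_top).ne'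
  have hq1 : (2 : ℝ≥0∞) ^ (-α) < 1 :=
    ENNReal.rpow_lt_one_of_one_lt_of_neg ENNReal.one_lt_two (neg_neg_of_pos hα)
  set Q := (2 : ℝ≥0∞) ^ (-α)
  set G := (1 - Q ^ 2)⁻¹
  set A := ENNReal.ofReal (2 * Real.pi)
  set B := ENNReal.ofReal (2 ^ α)
  set R := ENNReal.ofReal ((1 / 3) ^ α)
  have hR0 : R ≠ 0 := (ENNReal.ofReal_pos.mpr (by positivity)).ne'
  have hR : R ≠ ∞ := ENNReal.ofReal_ne_top
  have hG : G ≠ ∞ := ENNReal.inv_ne_top.mpr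
    (tsub_pos_of_lt (pow_lt_one₀ zero_le hq1 two_ne_zero)).ne'
  have hA : A ≠ ∞ := ENNReal.ofReal_ne_top
  have hB : B ≠ ∞ := ENNReal.ofReal_ne_top
  set D := ((R ^ 2)⁻¹ * (A ^ 2 * G * 4)) ^ ((1 : ℝ) / 2)
  set C := ((Q ^ 2)⁻¹ * (A ^ 2 * B ^ 2 * 4)) ^ ((1 : ℝ) / 2)
  have hD : D ≠ ∞ := by
    refine ENNReal.rpow_ne_top_of_nonneg (by norm_num) ?_
    finiteness
  have hC : C ≠ ∞ := by
    refine ENNReal.rpow_ne_top_of_nonneg (by norm_num) ?_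
    finiteness
  refine ⟨D⁻¹, C, ENNReal.inv_pos.mpr hD, hC, fun f hp hmeas hfin hl n _ => ?_⟩
  have hf : Integrable f circleMeasure :=
    memLp_one_iff_integrable.mp ⟨hmeas, lt_top_iff_ne_top.mpr hfin⟩
  have hω := fracModSmoothOne_sq_le hα hp hf hl n
  have hS := weightedEnergy_le hα hp hf hl n
  have hE := tsum_vdpWeylOne_le hη_one hη_zero α hl n
  have hT := weightedEnergy_le_tsum_vdpWeylOne hη_one hη_zero α hl n
  set E := ∑' k : ℕ, ((2 : ℝ≥0∞) ^ (-((n + k : ℕ) : ℝ) * α) *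
    eLpNorm (vdpWeylOne η α (2 ^ (n + k)) f) 1 circleMeasure) ^ (2 : ℝ)
  set W := fracModSmoothOne α 1 f (1 / 2 ^ n)
  set S := weightedEnergy α n f
  constructor
  · rw [← ENNReal.div_eq_inv_mul]
    refine ENNReal.div_le_of_le_mul' ?_
    rw [← pow_two_rpow_half W]
    refine rpow_half_le_of_mul_le (pow_ne_zero 2 hR0) (ENNReal.pow_ne_top hR) ?_
    calc R ^ 2 * E ≤ R ^ 2 * (A ^ 2 * (G * S)) := by gcongr
      _ = A ^ 2 * G * (R ^ 2 * S) := by ring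
      _ ≤ A ^ 2 * G * (4 * W ^ 2) := by gcongr
      _ = A ^ 2 * G * 4 * W ^ 2 := by ring
  · rw [← pow_two_rpow_half W]
    refine rpow_half_le_of_mul_le (pow_ne_zero 2 hq0) (ENNReal.pow_ne_top hq1.ne_top) ?_
    calc Q ^ 2 * W ^ 2 ≤ Q ^ 2 * (A ^ 2 * (B ^ 2 * S)) := by gcongr
      _ = A ^ 2 * B ^ 2 * (Q ^ 2 * S) := by ring
      _ ≤ A ^ 2 * B ^ 2 * (4 * E) := by gcongr
      _ = A ^ 2 * B ^ 2 * 4 * E := by ring
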